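/- Let G = (X, Γ, P) be a CFG in normal form and suppose X0 ⇒*_G w for some terminal word w ∈ Γ* with |w| > 1. Then there exist variables A, A1, A2 ∈ X and nonempty terminal words w1, w2 ∈ Γ* such that X0 ⇒*_G A (the length-one sentential form consisting of the variable A), (A → A1A2) ∈ P, A1 ⇒*_G w1, A2 ⇒*_G w2, and w = w1·w2. -/

import Mathlib

/-!
The derivation of `w` is organised as a binary parse tree (`CFG'.Yields`). A derivation of a
terminal word gives a parse tree for each symbol of the starting sentential form, by induction
from the end of the derivation (`CFG'.yields_of_derives`), and a parse tree can be
read back as a derivation (`CFG'.Yields.derives`). In a tree with a yield of length at least two the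
root carries a binary production `X → B C`. If both subtrees have nonempty yields, this is the
required split. Otherwise one child derives the empty word, so that `X ⇒* C` or `X ⇒* B` for
the other child, and the claim follows by induction on the tree.
-/

/-- A context-free grammar given by a set of productions. -/
structure CFG' (T N : Type) where
  P : Set (N × List (Symbol T N))

namespace CFG'

variable {T N : Type}

/-- One-step derivation relation of a grammar. -/
inductive Step (G : CFG' T N) : List (Symbol T N) → List (Symbol T N) → Prop
  | step {A : N} {w : List (Symbol T N)} (y z : List (Symbol T N)) :
      (A, w) ∈ G.P → Step G (y ++ [Symbol.nonterminal A] ++ z) (y ++ w ++ z)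

/-- Reflexive-transitive closure of the one-step derivation relation. -/
def Derives (G : CFG' T N) : List (Symbol T N) → List (Symbol T N) → Prop :=
  Relation.ReflTransGen G.Step

/-- Every production lies in `X × (XX ∪ Γ ∪ {ε})`. -/
def NormalForm (G : CFG' T N) : Prop :=
  ∀ p ∈ G.P,
    (∃ B C : N, p.2 = [Symbol.nonterminal B, Symbol.nonterminal C]) ∨
    (∃ a : T, p.2 = [Symbol.terminal a]) ∨ p.2 = []

/-- Every production lies in `X × ((Γ·X) ∪ {ε})`. -/
def RegularForm (G : CFG' T N) : Prop :=
  ∀ p ∈ G.P,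
    (∃ (a : T) (B : N), p.2 = [Symbol.terminal a, Symbol.nonterminal B]) ∨ p.2 = []

end CFG'

namespace CFG'

variable {T N : Type}

/-- `G.Yields x w`: there is a parse tree of the grammar `G`, using only productions in normal form,
with root labelled by the symbol `x` and with yield `w`. A terminal root is a leaf. -/
inductive Yields (G : CFG' T N) : Symbol T N → List T → Prop
  | terminal (a : T) : Yields G (Symbol.terminal a) [a]
  | empty {A : N} : (A, []) ∈ G.P → Yields G (Symbol.nonterminal A) []
  | letter {A : N} {a : T} : (A, [Symbol.terminal a]) ∈ G.P →
      Yields G (Symbol.nonterminal A) [a]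
  | pair {A B C : N} {u v : List T} :
      (A, [Symbol.nonterminal B, Symbol.nonterminal C]) ∈ G.P →
      Yields G (Symbol.nonterminal B) u → Yields G (Symbol.nonterminal C) v →
      Yields G (Symbol.nonterminal A) (u ++ v)

theorem derives_of_mem {G : CFG' T N} {A : N} {r : List (Symbol T N)} (h : (A, r) ∈ G.P) :
    G.Derives [Symbol.nonterminal A] r := by
  have := Step.step [] [] h
  simp only [List.nil_append, List.append_nil] at this
  exact Relation.ReflTransGen.single this

theorem Derives.context {G : CFG' T N} {u v : List (Symbol T N)} (h : G.Derives u v)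
    (p q : List (Symbol T N)) : G.Derives (p ++ u ++ q) (p ++ v ++ q) := by
  refine Relation.ReflTransGen.lift (fun s => p ++ s ++ q) ?_ _ _ h
  rintro _ _ ⟨y, z, hP⟩
  have := Step.step (p ++ y) (z ++ q) hP
  simpa only [Function.onFun, List.append_assoc] using this

theorem Derives.append {G : CFG' T N} {u u' v v' : List (Symbol T N)} (h : G.Derives u u')
    (h' : G.Derives v v') : G.Derives (u ++ v) (u' ++ v') := by
  have h1 := h.context [] v
  have h2 := h'.context u' []
  simp only [List.nil_append, List.append_nil] at h1 h2
  exact h1.trans h2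

theorem Yields.derives {G : CFG' T N} {x : Symbol T N} {w : List T} (h : G.Yields x w) :
    G.Derives [x] (w.map Symbol.terminal) := by
  induction h with
  | terminal a => exact Relation.ReflTransGen.refl
  | empty hP => exact derives_of_mem hP
  | letter hP => exact derives_of_mem hP
  | pair hP _ _ ihB ihC =>
    rw [List.map_append]
    exact (derives_of_mem hP).trans (ihB.append ihC)

/-- In a normal-form grammar, parse trees for the symbols on the right-hand side of a production
assemble into a parse tree for its left-hand side. -/
theorem yields_of_mem {G : CFG' T N} (hG : G.NormalForm) {A : N} {r : List (Symbol T N)}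
    (hP : (A, r) ∈ G.P) {ws : List (List T)} (h : List.Forall₂ G.Yields r ws) :
    G.Yields (Symbol.nonterminal A) ws.flatten := by
  rcases hG _ hP with ⟨B, C, hr⟩ | ⟨a, hr⟩ | hr <;> dsimp only at hr <;> subst hr
  · rcases h with _ | ⟨hB, _ | ⟨hC, _ | _⟩⟩
    simpa using Yields.pair hP hB hC
  · rcases h with _ | ⟨ha, _ | _⟩
    cases ha
    simpa using Yields.letter hP
  · cases h
    exact Yields.empty hP

theorem exists_append_of_forall₂ {α β : Type} {R : α → β → Prop} {l₁ l₂ : List α} {l : List β}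
    (h : List.Forall₂ R (l₁ ++ l₂) l) :
    ∃ m₁ m₂, List.Forall₂ R l₁ m₁ ∧ List.Forall₂ R l₂ m₂ ∧ l = m₁ ++ m₂ := by
  induction l₁ generalizing l with
  | nil => exact ⟨[], l, .nil, h, rfl⟩
  | cons a l₁ ih =>
    rcases h with _ | ⟨ha, h⟩
    obtain ⟨m₁, m₂, h₁, h₂, rfl⟩ := ih h
    exact ⟨_ :: m₁, m₂, .cons ha h₁, h₂, rfl⟩

/-- A derivation of a terminal word decomposes into one parse tree for each symbol of the
starting sentential form. -/
theorem yields_of_derives {G : CFG' T N} (hG : G.NormalForm) {s : List (Symbol T N)}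
    {w : List T} (h : G.Derives s (w.map Symbol.terminal)) :
    ∃ ws : List (List T), List.Forall₂ G.Yields s ws ∧ w = ws.flatten := by
  induction h using Relation.ReflTransGen.head_induction_on with
  | refl =>
    induction w with
    | nil => exact ⟨[], .nil, rfl⟩
    | cons a w ih =>
      obtain ⟨ws, hws, hw⟩ := ih
      exact ⟨[a] :: ws, .cons (.terminal a) hws, by simp [← hw]⟩
  | head hstep _ ih =>
    obtain ⟨ws, hws, rfl⟩ := ih
    obtain ⟨y, z, hP⟩ := hstep
    -- The trees for the produced right-hand side are joined under its left-hand side.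
    obtain ⟨ws₁, wz, h₁, hz, rfl⟩ := exists_append_of_forall₂ hws
    obtain ⟨wy, wr, hy, hr, rfl⟩ := exists_append_of_forall₂ h₁
    refine ⟨wy ++ [wr.flatten] ++ wz, ?_, by simp⟩
    exact List.rel_append (List.rel_append hy (.cons (yields_of_mem hG hP hr) .nil)) hz

/-- The splitting property for parse trees. The root is an arbitrary symbol so that induction on
the tree applies; a terminal root is excluded by the length of the yield. -/
theorem Yields.split {G : CFG' T N} {x : Symbol T N} {w : List T} (h : G.Yields x w)
    (hlen : 1 < w.length) :
    ∃ (A A1 A2 : N) (w1 w2 : List T),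
      G.Derives [x] [Symbol.nonterminal A] ∧
      (A, [Symbol.nonterminal A1, Symbol.nonterminal A2]) ∈ G.P ∧
      G.Derives [Symbol.nonterminal A1] (w1.map Symbol.terminal) ∧
      G.Derives [Symbol.nonterminal A2] (w2.map Symbol.terminal) ∧
      w = w1 ++ w2 ∧ w1 ≠ [] ∧ w2 ≠ [] := by
  induction h with
  | terminal a => simp at hlen
  | empty hP => simp at hlen
  | letter hP => simp at hlen
  | @pair X B C u v hP hB hC ihB ihC =>
    by_cases hu : u = []
    · subst hu
      have hXC : G.Derives [Symbol.nonterminal X] [Symbol.nonterminal C] :=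
        (derives_of_mem hP).trans (hB.derives.append Relation.ReflTransGen.refl)
      obtain ⟨A, A1, A2, w1, w2, hCA, hrest⟩ := ihC hlen
      exact ⟨A, A1, A2, w1, w2, hXC.trans hCA, hrest⟩
    by_cases hv : v = []
    · subst hv
      rw [List.append_nil] at hlen ⊢
      have hXB : G.Derives [Symbol.nonterminal X] [Symbol.nonterminal B] :=
        (derives_of_mem hP).trans
          (Derives.append (u := [Symbol.nonterminal B]) Relation.ReflTransGen.refl hC.derives)
      obtain ⟨A, A1, A2, w1, w2, hBA, hrest⟩ := ihB hlen
      exact ⟨A, A1, A2, w1, w2, hXB.trans hBA, hrest⟩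
    exact ⟨X, B, C, u, v, Relation.ReflTransGen.refl, hP, hB.derives, hC.derives, rfl, hu, hv⟩

end CFG'

/-- In a normal-form grammar, every terminal word of length `> 1` derivable from `X0`
splits along a binary production reachable from `X0`. -/
theorem derives_split_of_one_lt_length {T N : Type} [Fintype T] [Fintype N]
    (G : CFG' T N) (hG : G.NormalForm) (hfin : G.P.Finite)
    (X0 : N) (w : List T)
    (h : G.Derives [Symbol.nonterminal X0] (w.map Symbol.terminal))
    (hlen : 1 < w.length) :
    ∃ (A A1 A2 : N) (w1 w2 : List T),
      G.Derives [Symbol.nonterminal X0] [Symbol.nonterminal A] ∧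
      (A, [Symbol.nonterminal A1, Symbol.nonterminal A2]) ∈ G.P ∧
      G.Derives [Symbol.nonterminal A1] (w1.map Symbol.terminal) ∧
      G.Derives [Symbol.nonterminal A2] (w2.map Symbol.terminal) ∧
      w = w1 ++ w2 ∧ w1 ≠ [] ∧ w2 ≠ [] := by
  obtain ⟨ws, hws, rfl⟩ := CFG'.yields_of_derives hG h
  rcases hws with _ | ⟨hX, _ | _⟩
  simp only [List.flatten_cons, List.flatten_nil, List.append_nil] at hlen ⊢
  exact hX.split hlen
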